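/- arXiv:2212.08193 — 6 statements merged into one kernel-verified Lean document; each statement's English description precedes it below -/
import Mathlib

section
/- Let G be a simple graph and S ⊆ V(G) a set of detectors. Then S is an operational ERR:LD set (i.e., no output with at most one faulty detector is consistent with two distinct intruder configurations) if and only if the following four conditions hold: (i) for every v ∈ V(G), |N[v] ∩ S| ≥ 3; (ii) for all distinct u, v ∈ S, |((N(v) ∩ S) △ (N(u) ∩ S)) − {v, u}| ≥ 1; (iii) for every v ∈ V(G) − S and every u ∈ S, |((N(v) ∩ S) △ (N(u) ∩ S)) − {u}| ≥ 2; (iv) for all distinct u, v ∈ V(G) − S, |(N(v) ∩ S) △ (N(u) ∩ S)| ≥ 3. -/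
open scoped symmDiff

variable {V : Type*}

/-- The closed neighborhood `N[v]` of a vertex. -/
def closedNbhd (G : SimpleGraph V) (v : V) : Set V := insert v (G.neighborSet v)

/-- `S` is an error-correcting locating-dominating (ERR:LD) set: conditions (i)-(iv). -/
def IsErrLD (G : SimpleGraph V) (S : Set V) : Prop :=
  (∀ v : V, 3 ≤ (closedNbhd G v ∩ S).encard) ∧
  (∀ v ∈ S, ∀ u ∈ S, u ≠ v →
    1 ≤ ((((G.neighborSet v ∩ S) ∆ (G.neighborSet u ∩ S)) \ {v, u}).encard)) ∧
  (∀ v ∉ S, ∀ u ∈ S,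
    2 ≤ ((((G.neighborSet v ∩ S) ∆ (G.neighborSet u ∩ S)) \ {u}).encard)) ∧
  (∀ v ∉ S, ∀ u ∉ S, u ≠ v →
    3 ≤ (((G.neighborSet v ∩ S) ∆ (G.neighborSet u ∩ S)).encard))

open Classical in
/-- True signal of a detector `w` under intruder configuration `c`:
`2` if the intruder is at `w`, `1` if the intruder is in `N(w)`, `0` otherwise. -/
noncomputable def trueSignal (G : SimpleGraph V) (c : Option V) (w : V) : Fin 3 :=
  match c with
  | none => 0
  | some x => if x = w then 2 else if G.Adj w x then 1 else 0

/-- An output `f` is consistent with configuration `c` if it agrees with the true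
signals at all but at most one detector of `S`. -/
def Consistent (G : SimpleGraph V) (S : Set V) (f : V → Fin 3) (c : Option V) : Prop :=
  {w | w ∈ S ∧ f w ≠ trueSignal G c w}.Subsingleton

/-- `S` is an operational ERR:LD set: no output is consistent with two distinct
intruder configurations. -/
def IsOperationalErrLD (G : SimpleGraph V) (S : Set V) : Prop :=
  ∀ (f : V → Fin 3) (c₁ c₂ : Option V),
    Consistent G S f c₁ → Consistent G S f c₂ → c₁ = c₂

/-! One faulty detector can be tolerated exactly when the signal vectors `trueSignal G c` form a
code correcting one error, i.e. when any two of them differ at three or more detectors. The vectors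
of `none` and `some v` differ on `N[v] ∩ S`. Those of `some v` and `some u` differ on `N(v) ∆ N(u)`
inside `S`, and also at `v` and at `u` if these are detectors, as only the detector hosting the
intruder signals `2`; each of the two that lies in `S` therefore lowers the bound on the rest of the
symmetric difference by one. -/

section Decoding

variable {α β ι : Type*}

theorem encard_le_add_iff_exists_subset {s : Set α} {m n : ℕ∞} :
    s.encard ≤ m + n ↔ ∃ t ⊆ s, t.encard ≤ m ∧ (s \ t).encard ≤ n := by
  constructor
  · intro h
    obtain hm | hm := le_total s.encard m
    · exact ⟨s, subset_rfl, hm, by simp⟩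
    · obtain ⟨t, hts, rfl⟩ := Set.exists_subset_encard_eq hm
      obtain ht | ht := eq_or_ne t.encard ⊤
      · exact ⟨s, subset_rfl, ht ▸ le_top, by simp⟩
      · refine ⟨t, hts, le_rfl, ?_⟩
        rwa [← Set.encard_sdiff_add_encard_of_subset hts, add_comm,
          ENat.add_le_add_iff_left ht] at h
  · rintro ⟨t, hts, hm, hn⟩
    rw [← Set.encard_sdiff_add_encard_of_subset hts, add_comm]
    exact add_le_add hm hn

/-- The coordinates in `S` at which `f` and `g` differ; its cardinality is the Hamming distance
of `f` and `g` restricted to `S`, possibly infinite. -/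
def disagreementSet (S : Set α) (f g : α → β) : Set α := {w | w ∈ S ∧ f w ≠ g w}

theorem mem_disagreementSet {S : Set α} {f g : α → β} {w : α} :
    w ∈ disagreementSet S f g ↔ w ∈ S ∧ f w ≠ g w := Iff.rfl

theorem disagreementSet_comm (S : Set α) (f g : α → β) :
    disagreementSet S f g = disagreementSet S g f := by
  simp only [disagreementSet, ne_comm]

theorem disagreementSet_subset_union (S : Set α) (f g h : α → β) :
    disagreementSet S f h ⊆ disagreementSet S f g ∪ disagreementSet S g h := by
  rintro w ⟨hw, hfh⟩
  obtain hfg | hfg := eq_or_ne (f w) (g w)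
  · exact .inr ⟨hw, hfg ▸ hfh⟩
  · exact .inl ⟨hw, hfg⟩

theorem exists_encard_disagreementSet_le_iff {S : Set α} {f g : α → β} {m n : ℕ∞} :
    (∃ h, (disagreementSet S h f).encard ≤ m ∧ (disagreementSet S h g).encard ≤ n) ↔
      (disagreementSet S f g).encard ≤ m + n := by
  classical
  constructor
  · rintro ⟨h, hf, hg⟩
    calc (disagreementSet S f g).encard
        ≤ (disagreementSet S f h ∪ disagreementSet S h g).encard :=
          Set.encard_le_encard (disagreementSet_subset_union S f h g)
      _ ≤ (disagreementSet S f h).encard + (disagreementSet S h g).encard :=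
          Set.encard_union_le _ _
      _ ≤ m + n := add_le_add (disagreementSet_comm S h f ▸ hf) hg
  · intro hfg
    obtain ⟨t, -, hm, hn⟩ := encard_le_add_iff_exists_subset.mp hfg
    have hf : disagreementSet S (t.piecewise g f) f ⊆ t := by
      rintro w ⟨-, hw⟩
      by_contra hwt
      exact hw (Set.piecewise_eq_of_notMem t g f hwt)
    have hg : disagreementSet S (t.piecewise g f) g ⊆ disagreementSet S f g \ t := by
      rintro w ⟨hwS, hw⟩
      have hwt : w ∉ t := fun hwt => hw (Set.piecewise_eq_of_mem t g f hwt)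
      rw [Set.piecewise_eq_of_notMem t g f hwt] at hw
      exact ⟨⟨hwS, hw⟩, hwt⟩
    exact ⟨t.piecewise g f, (Set.encard_le_encard hf).trans hm, (Set.encard_le_encard hg).trans hn⟩

/-- The family of words `σ`, read on the coordinates in `S`, corrects `t` errors: a received word
within distance `t` of some `σ i` determines `i`. The index, not merely the word, is recovered. -/
def CorrectsErrors (S : Set α) (σ : ι → α → β) (t : ℕ∞) : Prop :=
  ∀ (f : α → β) (i j : ι), (disagreementSet S f (σ i)).encard ≤ t →
    (disagreementSet S f (σ j)).encard ≤ t → i = j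

theorem correctsErrors_iff_pairwise_lt_encard {S : Set α} {σ : ι → α → β} {t : ℕ∞} :
    CorrectsErrors S σ t ↔ Pairwise fun i j => t + t < (disagreementSet S (σ i) (σ j)).encard := by
  have not_close_iff (i j : ι) : t + t < (disagreementSet S (σ i) (σ j)).encard ↔
      ∀ f, (disagreementSet S f (σ i)).encard ≤ t → ¬ (disagreementSet S f (σ j)).encard ≤ t := by
    rw [← not_le, ← exists_encard_disagreementSet_le_iff]
    simp only [not_exists, not_and]
  simp only [not_close_iff]
  exact ⟨fun h i j hij f hi hj => hij (h f i j hi hj),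
    fun h f i j hi hj => by_contra fun hij => h hij f hi hj⟩

end Decoding

section Pairwise

variable {α : Type*}

theorem pairwise_option_iff {r : Option α → Option α → Prop} [Std.Symm r] :
    Pairwise r ↔ (∀ a, r none (some a)) ∧ Pairwise fun a b => r (some a) (some b) := by
  constructor
  · exact fun h => ⟨fun a => h (Option.some_ne_none a).symm,
      fun a b hab => h ((Option.some_injective α).ne hab)⟩
  · rintro ⟨hnone, hsome⟩ (_ | a) (_ | b) hab
    · exact absurd rfl hab
    · exact hnone b
    · exact symm_of r (hnone a)
    · exact hsome fun h => hab (congrArg some h)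

theorem pairwise_iff_mem_notMem {r : α → α → Prop} [Std.Symm r] (s : Set α) :
    Pairwise r ↔ s.Pairwise r ∧ (∀ a ∉ s, ∀ b ∈ s, r a b) ∧ sᶜ.Pairwise r := by
  have hne : ∀ a ∉ s, ∀ b ∈ s, a ≠ b := fun a ha b hb hab => ha (hab ▸ hb)
  rw [← Set.pairwise_univ, ← Set.compl_union_self s, Set.pairwise_union_of_symm]
  grind

end Pairwise

section Signals

variable {G : SimpleGraph V} {S : Set V} {u v w : V}

theorem trueSignal_some_ne_zero_iff : trueSignal G (some v) w ≠ 0 ↔ w ∈ closedNbhd G v := by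
  simp only [trueSignal, closedNbhd, Set.mem_insert_iff, SimpleGraph.mem_neighborSet,
    G.adj_comm v w]
  grind

theorem trueSignal_some_ne_trueSignal_some_iff (h : v ≠ u) :
    trueSignal G (some v) w ≠ trueSignal G (some u) w ↔
      w ∈ G.neighborSet v ∆ G.neighborSet u ∪ {v, u} := by
  simp only [trueSignal, Set.mem_union, Set.mem_symmDiff, SimpleGraph.mem_neighborSet,
    Set.mem_insert_iff, Set.mem_singleton_iff, G.adj_comm v w, G.adj_comm u w]
  grind

theorem disagreementSet_trueSignal_none_some :
    disagreementSet S (trueSignal G none) (trueSignal G (some v)) = closedNbhd G v ∩ S := by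
  ext w
  rw [mem_disagreementSet, Set.mem_inter_iff, and_comm, ← trueSignal_some_ne_zero_iff, ne_comm]
  rfl

theorem disagreementSet_trueSignal_some_some (h : v ≠ u) :
    disagreementSet S (trueSignal G (some v)) (trueSignal G (some u)) =
      ((G.neighborSet v ∩ S) ∆ (G.neighborSet u ∩ S)) \ {v, u} ∪ {v, u} ∩ S := by
  ext w
  rw [mem_disagreementSet, trueSignal_some_ne_trueSignal_some_iff h,
    ← Set.inter_symmDiff_distrib_right]
  simp only [Set.mem_union, Set.mem_sdiff, Set.mem_inter_iff]
  grind

theorem encard_disagreementSet_trueSignal_some_some (h : v ≠ u) :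
    (disagreementSet S (trueSignal G (some v)) (trueSignal G (some u))).encard =
      (((G.neighborSet v ∩ S) ∆ (G.neighborSet u ∩ S)) \ {v, u}).encard +
        ({v, u} ∩ S : Set V).encard := by
  rw [disagreementSet_trueSignal_some_some h,
    Set.encard_union_eq (Set.disjoint_sdiff_left.mono_right Set.inter_subset_left)]

theorem notMem_symmDiff_inter_of_notMem {s t : Set V} (hv : v ∉ S) :
    v ∉ (s ∩ S) ∆ (t ∩ S) := by
  rw [← Set.inter_symmDiff_distrib_right]
  exact fun h => hv h.2

/-- The configurations `c₁` and `c₂` are told apart by the detectors in `S` even if one of them is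
faulty. Three differing signals are needed because the faulty detector may be a different one in
each of the two configurations. -/
def Distinguishable (G : SimpleGraph V) (S : Set V) (c₁ c₂ : Option V) : Prop :=
  3 ≤ (disagreementSet S (trueSignal G c₁) (trueSignal G c₂)).encard

instance Distinguishable.instSymm : Std.Symm (Distinguishable G S) where
  symm c₁ c₂ h := by rwa [Distinguishable, disagreementSet_comm]

instance Distinguishable.instSymmSome :
    Std.Symm fun v u => Distinguishable G S (some v) (some u) where
  symm _ _ h := symm_of (Distinguishable G S) h

theorem distinguishable_none_some :
    Distinguishable G S none (some v) ↔ 3 ≤ (closedNbhd G v ∩ S).encard := by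
  rw [Distinguishable, disagreementSet_trueSignal_none_some]

theorem distinguishable_some_some_of_mem_of_mem (hv : v ∈ S) (hu : u ∈ S) (h : v ≠ u) :
    Distinguishable G S (some v) (some u) ↔
      1 ≤ (((G.neighborSet v ∩ S) ∆ (G.neighborSet u ∩ S)) \ {v, u}).encard := by
  rw [Distinguishable, encard_disagreementSet_trueSignal_some_some h,
    Set.inter_eq_left.mpr (Set.pair_subset hv hu), Set.encard_pair h,
    show (3 : ℕ∞) = 1 + 2 by norm_num, ENat.add_le_add_iff_right (by simp)]

theorem distinguishable_some_some_of_notMem_of_mem (hv : v ∉ S) (hu : u ∈ S) :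
    Distinguishable G S (some v) (some u) ↔
      2 ≤ (((G.neighborSet v ∩ S) ∆ (G.neighborSet u ∩ S)) \ {u}).encard := by
  have h : v ≠ u := fun h => hv (h ▸ hu)
  rw [Distinguishable, encard_disagreementSet_trueSignal_some_some h,
    Set.insert_inter_of_notMem hv, Set.inter_eq_left.mpr (Set.singleton_subset_iff.mpr hu),
    Set.encard_singleton, Set.insert_eq, ← Set.sdiff_sdiff,
    Set.sdiff_singleton_eq_self (notMem_symmDiff_inter_of_notMem hv), ← two_add_one_eq_three,
    ENat.add_le_add_iff_right (by simp)]

theorem distinguishable_some_some_of_notMem_of_notMem (hv : v ∉ S) (hu : u ∉ S) (h : v ≠ u) :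
    Distinguishable G S (some v) (some u) ↔
      3 ≤ ((G.neighborSet v ∩ S) ∆ (G.neighborSet u ∩ S)).encard := by
  rw [Distinguishable, encard_disagreementSet_trueSignal_some_some h,
    Set.insert_inter_of_notMem hv, Set.singleton_inter_eq_empty.mpr hu, Set.encard_empty, add_zero,
    Set.insert_eq, ← Set.sdiff_sdiff,
    Set.sdiff_singleton_eq_self (notMem_symmDiff_inter_of_notMem hv),
    Set.sdiff_singleton_eq_self (notMem_symmDiff_inter_of_notMem hu)]

theorem isOperationalErrLD_iff_correctsErrors :
    IsOperationalErrLD G S ↔ CorrectsErrors S (trueSignal G) 1 := by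
  simp only [CorrectsErrors, Set.encard_le_one_iff_subsingleton]
  rfl

theorem isOperationalErrLD_iff_pairwise_distinguishable :
    IsOperationalErrLD G S ↔ Pairwise (Distinguishable G S) := by
  have two_lt_iff (n : ℕ∞) : 1 + 1 < n ↔ 3 ≤ n := by
    rw [one_add_one_eq_two, ← two_add_one_eq_three, ENat.add_one_le_iff (by simp)]
  simp only [isOperationalErrLD_iff_correctsErrors, correctsErrors_iff_pairwise_lt_encard,
    two_lt_iff]
  rfl

end Signals

theorem operational_iff_errLD (G : SimpleGraph V) (S : Set V) :
    IsOperationalErrLD G S ↔ IsErrLD G S := by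
  rw [isOperationalErrLD_iff_pairwise_distinguishable, pairwise_option_iff,
    pairwise_iff_mem_notMem S]
  refine and_congr (forall_congr' fun v => distinguishable_none_some) (and_congr ?both
    (and_congr ?one ?neither))
  case both =>
    exact forall₄_congr fun v hv u hu => (forall_congr' fun h =>
      distinguishable_some_some_of_mem_of_mem hv hu h).trans (by rw [ne_comm])
  case one =>
    exact forall₄_congr fun v hv u hu => distinguishable_some_some_of_notMem_of_mem hv hu
  case neither =>
    exact forall₄_congr fun v hv u hu => (forall_congr' fun h =>
      distinguishable_some_some_of_notMem_of_notMem hv hu h).trans (by rw [ne_comm])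
end

section
/- Let G be a simple graph, S ⊆ V(G) an operational ERR:LD set, and v ∈ S. Then (i) |N(v) ∩ S| ≥ 2, and (ii) for every u ∈ S with u ≠ v, |((N(v) ∩ S) △ (N(u) ∩ S)) − {v, u}| ≥ 1. -/
open scoped symmDiff

variable {V : Type*}

/-!
For distinct configurations `c₁`, `c₂` and any vertex `a`, the output that follows `c₂` at `a` and
`c₁` elsewhere is consistent with `c₁`. It must therefore be inconsistent with `c₂`, so at least two
detectors other than `a` tell `c₁` and `c₂` apart. Away from the intruder positions, a detector
only tells whether it is adjacent to the intruder. With `c₁ = none`, `c₂ = some v` and `a = v`,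
both of the two detectors thus lie in `N(v)`. With `c₁ = some v`, `c₂ = some u` and `a = u`, one of
the two may be `v`, and the other lies in `N(v) ∆ N(u)`.
-/

/-- The detectors of `S` that tell the configurations `c₁` and `c₂` apart when none is faulty. -/
def distinguishingDetectors (G : SimpleGraph V) (S : Set V) (c₁ c₂ : Option V) : Set V :=
  {w ∈ S | trueSignal G c₁ w ≠ trueSignal G c₂ w}

section

variable {G : SimpleGraph V}

lemma trueSignal_none_eq_some_iff {v w : V} (hwv : w ≠ v) :
    trueSignal G none w = trueSignal G (some v) w ↔ ¬G.Adj v w := by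
  simp [trueSignal, hwv.symm, G.adj_comm]

lemma trueSignal_some_eq_some_iff {v u w : V} (hwv : w ≠ v) (hwu : w ≠ u) :
    trueSignal G (some v) w = trueSignal G (some u) w ↔ (G.Adj v w ↔ G.Adj u w) := by
  rw [G.adj_comm v, G.adj_comm u]
  by_cases hv : G.Adj w v <;> by_cases hu : G.Adj w u <;>
    simp [trueSignal, hwv.symm, hwu.symm, hv, hu]

end

section

variable (G : SimpleGraph V) (S : Set V)

lemma distinguishingDetectors_none_some_sdiff (v : V) :
    distinguishingDetectors G S none (some v) \ {v} = G.neighborSet v ∩ S := by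
  ext w
  by_cases hwv : w = v
  · simp [hwv]
  · simp [distinguishingDetectors, trueSignal_none_eq_some_iff hwv, hwv, and_comm]

lemma distinguishingDetectors_some_some_sdiff (v u : V) :
    distinguishingDetectors G S (some v) (some u) \ {v, u} =
      ((G.neighborSet v ∩ S) ∆ (G.neighborSet u ∩ S)) \ {v, u} := by
  ext w
  by_cases hw : w = v ∨ w = u
  · simp [hw]
  · obtain ⟨hwv, hwu⟩ := not_or.mp hw
    simp only [distinguishingDetectors, Set.mem_sdiff, Set.mem_ofPred_eq, Set.mem_symmDiff,
      Set.mem_inter_iff, SimpleGraph.mem_neighborSet, ne_eq, trueSignal_some_eq_some_iff hwv hwu]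
    tauto

lemma consistent_update_trueSignal [DecidableEq V] (c : Option V) (a : V) (s : Fin 3) :
    Consistent G S (Function.update (trueSignal G c) a s) c := by
  refine Set.subsingleton_singleton.anti (t := {a}) fun w ⟨_, hw⟩ ↦ ?_
  by_contra hwa
  exact hw (Function.update_of_ne hwa _ _)

lemma consistent_update_trueSignal_iff_subsingleton [DecidableEq V]
    (c₁ c₂ : Option V) (a : V) :
    Consistent G S (Function.update (trueSignal G c₁) a (trueSignal G c₂ a)) c₂ ↔
      (distinguishingDetectors G S c₁ c₂ \ {a}).Subsingleton := by
  suffices {w | w ∈ S ∧ Function.update (trueSignal G c₁) a (trueSignal G c₂ a) w ≠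
      trueSignal G c₂ w} = distinguishingDetectors G S c₁ c₂ \ {a} by rw [Consistent, this]
  ext w
  by_cases hwa : w = a
  · subst hwa
    simp
  · simp [distinguishingDetectors, hwa]

end

namespace IsOperationalErrLD

variable {G : SimpleGraph V} {S : Set V}

lemma nontrivial_distinguishingDetectors_sdiff (hS : IsOperationalErrLD G S)
    {c₁ c₂ : Option V} (hc : c₁ ≠ c₂) (a : V) :
    (distinguishingDetectors G S c₁ c₂ \ {a}).Nontrivial := by
  classical
  by_contra hsub
  rw [Set.not_nontrivial_iff, ← consistent_update_trueSignal_iff_subsingleton] at hsub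
  exact hc (hS _ c₁ c₂ (consistent_update_trueSignal G S c₁ a _) hsub)

lemma two_le_encard_neighborSet_inter (hS : IsOperationalErrLD G S) (v : V) :
    2 ≤ (G.neighborSet v ∩ S).encard := by
  have hD := hS.nontrivial_distinguishingDetectors_sdiff (Option.some_ne_none v).symm v
  rw [distinguishingDetectors_none_some_sdiff] at hD
  rw [← one_add_one_eq_two]
  exact Order.add_one_le_of_lt (Set.one_lt_encard_iff_nontrivial.mpr hD)

lemma one_le_encard_symmDiff_sdiff (hS : IsOperationalErrLD G S) {v u : V} (huv : u ≠ v) :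
    1 ≤ (((G.neighborSet v ∩ S) ∆ (G.neighborSet u ∩ S)) \ {v, u}).encard := by
  rw [Set.one_le_encard_iff_nonempty, ← distinguishingDetectors_some_some_sdiff]
  have hc : some v ≠ some u := (Option.some_injective V).ne huv.symm
  obtain ⟨w, ⟨hwD, hwu⟩, hwv⟩ := (hS.nontrivial_distinguishingDetectors_sdiff hc u).exists_ne v
  exact ⟨w, hwD, not_or.mpr ⟨hwv, hwu⟩⟩

end IsOperationalErrLD

theorem errLD_detector_properties_general (G : SimpleGraph V) (S : Set V)
    (hS : IsOperationalErrLD G S) (v : V) :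
    2 ≤ (G.neighborSet v ∩ S).encard ∧
    (∀ u, u ≠ v →
      1 ≤ ((((G.neighborSet v ∩ S) ∆ (G.neighborSet u ∩ S)) \ {v, u}).encard)) :=
  ⟨hS.two_le_encard_neighborSet_inter v, fun _ huv ↦ hS.one_le_encard_symmDiff_sdiff huv⟩

theorem errLD_detector_properties (G : SimpleGraph V) (S : Set V)
    (hS : IsOperationalErrLD G S) (v : V) (hv : v ∈ S) :
    2 ≤ (G.neighborSet v ∩ S).encard ∧
    (∀ u ∈ S, u ≠ v →
      1 ≤ ((((G.neighborSet v ∩ S) ∆ (G.neighborSet u ∩ S)) \ {v, u}).encard)) :=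
  have ⟨hdom, hsep⟩ := errLD_detector_properties_general G S hS v
  ⟨hdom, fun u _ ↦ hsep u⟩
end

section
/- Let G be a simple graph, S ⊆ V(G) an operational ERR:LD set, and v ∈ V(G) − S. Then (i) |N(v) ∩ S| ≥ 3, (ii) for every u ∈ S, |((N(v) ∩ S) △ (N(u) ∩ S)) − {u}| ≥ 2, and (iii) for every u ∈ V(G) − S with u ≠ v, |(N(v) ∩ S) △ (N(u) ∩ S)| ≥ 3. -/
open scoped symmDiff

variable {V : Type*}

/-!
Tolerating one wrong detector is a minimum-distance condition: if the signals of two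
configurations differed at no more than two detectors, then replacing one of the differing values
in the first signal by the second signal's value would give an output within one error of both.
Hence the signals of distinct configurations differ at three or more detectors. The signals of
intruders at `x ≠ y` differ exactly on `N(x) ∆ N(y)` and at `x` and `y` themselves. If `x` is not a
detector, then `y` is the only possible detector among these last two, so removing it costs at most
one of the three.
-/

section Disagreement

variable {α β : Type*}

/-- The points of `S` at which `f` and `g` differ. Its `Set.encard` is the Hamming distance of
`f` and `g` on `S`, allowing infinite values. -/
def disagreement (S : Set α) (f g : α → β) : Set α := {w | w ∈ S ∧ f w ≠ g w}

theorem disagreement_self (S : Set α) (f : α → β) : disagreement S f f = ∅ := by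
  simp [disagreement]

theorem disagreement_update_self_subset [DecidableEq α] (S : Set α) (f : α → β) (a : α) (b : β) :
    disagreement S (Function.update f a b) f ⊆ {a} := by
  rintro w ⟨-, hw⟩
  by_contra hwa
  exact hw (Function.update_of_ne hwa b f)

theorem disagreement_update_eq_sdiff [DecidableEq α] (S : Set α) (f g : α → β) (a : α) :
    disagreement S (Function.update f a (g a)) g = disagreement S f g \ {a} := by
  ext w
  by_cases hwa : w = a
  · subst hwa
    simp [disagreement]
  · simp [disagreement, hwa]

theorem three_le_encard_disagreement_of_forall {S : Set α} {f g : α → β}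
    (h : ∀ p : α → β, (disagreement S p f).Subsingleton → (disagreement S p g).Nontrivial) :
    3 ≤ (disagreement S f g).encard := by
  classical
  have hfg : (disagreement S f g).Nontrivial :=
    h f (disagreement_self S f ▸ Set.subsingleton_empty)
  obtain ⟨a, ha⟩ := hfg.nonempty
  have hrest : (disagreement S f g \ {a}).Nontrivial := by
    rw [← disagreement_update_eq_sdiff]
    exact h _ (Set.subsingleton_singleton.anti (disagreement_update_self_subset S f a (g a)))
  calc (3 : ℕ∞) = 2 + 1 := two_add_one_eq_three.symm
    _ ≤ (disagreement S f g \ {a}).encard + 1 := by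
      gcongr
      exact Order.add_one_le_of_lt (Set.one_lt_encard_iff_nontrivial.2 hrest)
    _ = (disagreement S f g).encard := Set.encard_sdiff_singleton_add_one ha

end Disagreement

theorem IsOperationalErrLD.three_le_encard_disagreement {G : SimpleGraph V} {S : Set V}
    (hS : IsOperationalErrLD G S) {c₁ c₂ : Option V} (hc : c₁ ≠ c₂) :
    3 ≤ (disagreement S (trueSignal G c₁) (trueSignal G c₂)).encard :=
  three_le_encard_disagreement_of_forall fun p h₁ ↦
    Set.not_subsingleton_iff.1 fun h₂ ↦ hc (hS p c₁ c₂ h₁ h₂)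

theorem disagreement_trueSignal_some_none (G : SimpleGraph V) (S : Set V) (x : V) :
    disagreement S (trueSignal G (some x)) (trueSignal G none) = closedNbhd G x ∩ S := by
  ext w
  by_cases hxw : x = w <;>
    simp [disagreement, trueSignal, closedNbhd, hxw, eq_comm, G.adj_comm, and_comm]

theorem trueSignal_some_eq_some_iff_s2 (G : SimpleGraph V) {x y : V} (hxy : x ≠ y) (w : V) :
    trueSignal G (some x) w = trueSignal G (some y) w ↔
      w ≠ x ∧ w ≠ y ∧ (G.Adj w x ↔ G.Adj w y) := by
  simp only [trueSignal]
  grind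

theorem disagreement_trueSignal_some_some (G : SimpleGraph V) (S : Set V) {x y : V} (hxy : x ≠ y) :
    disagreement S (trueSignal G (some x)) (trueSignal G (some y)) =
      ((G.neighborSet x ∩ S) ∆ (G.neighborSet y ∩ S)) ∪ ({x, y} ∩ S) := by
  ext w
  simp only [disagreement, Set.mem_ofPred_eq, ne_eq, trueSignal_some_eq_some_iff_s2 G hxy,
    Set.mem_union, Set.mem_symmDiff, Set.mem_inter_iff, SimpleGraph.mem_neighborSet,
    Set.mem_insert_iff, Set.mem_singleton_iff, G.adj_comm w]
  tauto

theorem errLD_nondetector_properties (G : SimpleGraph V) (S : Set V)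
    (hS : IsOperationalErrLD G S) (v : V) (hv : v ∉ S) :
    3 ≤ (G.neighborSet v ∩ S).encard ∧
    (∀ u ∈ S,
      2 ≤ ((((G.neighborSet v ∩ S) ∆ (G.neighborSet u ∩ S)) \ {u}).encard)) ∧
    (∀ u ∉ S, u ≠ v →
      3 ≤ (((G.neighborSet v ∩ S) ∆ (G.neighborSet u ∩ S)).encard)) := by
  refine ⟨?_, fun u hu ↦ ?_, fun u hu huv ↦ ?_⟩
  · have h := hS.three_le_encard_disagreement (Option.some_ne_none v)
    rwa [disagreement_trueSignal_some_none, closedNbhd, Set.insert_inter_of_notMem hv] at h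
  · have hvu : v ≠ u := fun h ↦ hv (h ▸ hu)
    have h := hS.three_le_encard_disagreement (Option.some_injective V |>.ne hvu)
    rw [disagreement_trueSignal_some_some G S hvu, Set.insert_inter_of_notMem hv,
      Set.singleton_inter_of_mem hu, ← Set.sdiff_union_self,
      Set.encard_union_eq Set.disjoint_sdiff_left, Set.encard_singleton] at h
    exact (ENat.add_le_add_iff_right ENat.one_ne_top).1 (two_add_one_eq_three.trans_le h)
  · have h := hS.three_le_encard_disagreement (Option.some_injective V |>.ne huv.symm)
    rwa [disagreement_trueSignal_some_some G S huv.symm, Set.insert_inter_of_notMem hv,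
      Set.singleton_inter_of_notMem hu, Set.union_empty] at h
end

section
/- Let G be a simple graph. Every DET:LD set of G is also a RED:LD set of G. -/
open scoped symmDiff

variable {V : Type*}

/-- `S` is a redundant locating-dominating (RED:LD) set. -/
def IsRedLD (G : SimpleGraph V) (S : Set V) : Prop :=
  (∀ v : V, 2 ≤ (closedNbhd G v ∩ S).encard) ∧
  (∀ v ∈ S, ∀ u ∉ S,
    1 ≤ ((((G.neighborSet v ∩ S) ∆ (G.neighborSet u ∩ S)) \ {v}).encard)) ∧
  (∀ v ∉ S, ∀ u ∉ S, u ≠ v →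
    2 ≤ (((G.neighborSet v ∩ S) ∆ (G.neighborSet u ∩ S)).encard))

/-- `S` is an error-detecting locating-dominating (DET:LD) set. -/
def IsDetLD (G : SimpleGraph V) (S : Set V) : Prop :=
  (∀ v : V, 2 ≤ (closedNbhd G v ∩ S).encard) ∧
  (∀ v ∈ S, ∀ u ∈ S, u ≠ v →
    1 ≤ (((G.neighborSet v ∩ S) ∆ (G.neighborSet u ∩ S)).encard)) ∧
  (∀ v ∉ S, ∀ u ∈ S,
    2 ≤ ((G.neighborSet v ∩ S) \ (G.neighborSet u ∩ S)).encard ∨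
    1 ≤ ((G.neighborSet u ∩ S) \ (G.neighborSet v ∩ S)).encard) ∧
  (∀ v ∉ S, ∀ u ∉ S, u ≠ v →
    2 ≤ ((G.neighborSet v ∩ S) \ (G.neighborSet u ∩ S)).encard ∨
    2 ≤ ((G.neighborSet u ∩ S) \ (G.neighborSet v ∩ S)).encard)

section SymmDiff

variable {α : Type*} {s t : Set α} {a : α} {n : ℕ∞}

theorem le_encard_symmDiff_of_le_encard_sdiff
    (h : n ≤ (s \ t).encard ∨ n ≤ (t \ s).encard) : n ≤ (s ∆ t).encard := by
  rcases h with hst | hts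
  · exact hst.trans (Set.encard_le_encard Set.subset_union_left)
  · exact hts.trans (Set.encard_le_encard Set.subset_union_right)

-- Only `t \ s` can lose an element when `a` is deleted, hence the asymmetric thresholds.
theorem le_encard_symmDiff_sdiff_singleton (ha : a ∉ s)
    (h : n + 1 ≤ (t \ s).encard ∨ n ≤ (s \ t).encard) : n ≤ ((s ∆ t) \ {a}).encard := by
  rcases h with hts | hst
  · calc
      n ≤ (t \ s).encard - 1 := ENat.le_sub_of_add_le_right ENat.one_ne_top hts
      _ ≤ ((t \ s) \ {a}).encard := Set.encard_tsub_one_le_encard_sdiff_singleton _ _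
      _ ≤ ((s ∆ t) \ {a}).encard :=
        Set.encard_le_encard (Set.sdiff_subset_sdiff_left Set.subset_union_right)
  · have hsub : s \ t ⊆ (s ∆ t) \ {a} :=
      Set.subset_sdiff_singleton Set.subset_union_left fun hmem ↦ ha hmem.1
    exact hst.trans (Set.encard_le_encard hsub)

end SymmDiff

theorem detLD_isRedLD (G : SimpleGraph V) (S : Set V) (h : IsDetLD G S) :
    IsRedLD G S := by
  obtain ⟨hdom, -, hout_in, hout_out⟩ := h
  refine ⟨hdom, fun v hv u hu ↦ ?_, fun v hv u hu huv ↦ ?_⟩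
  · have hvN : v ∉ G.neighborSet v ∩ S := fun hmem ↦ G.notMem_neighborSet_self hmem.1
    apply le_encard_symmDiff_sdiff_singleton hvN
    simpa only [one_add_one_eq_two] using hout_in u hu v hv
  · exact le_encard_symmDiff_of_le_encard_sdiff (hout_out v hv u hu huv)
end

section
/- If G is a finite cubic (3-regular) twin-free simple graph on n vertices and S is an ERR:LD set of G, then 4·|S| ≥ 3·n, i.e., |S| ≥ 3n/4. -/
/-!
Count the pairs `(v, u)` with `u ∈ N[v] ∩ S`. Each vertex `v` occurs in at least three of them by
condition (i), and each `u ∈ S` occurs in exactly `|N[u]| = 4`.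
-/

open scoped symmDiff

variable {V : Type*}

/-- `G` is twin-free: no two distinct vertices `u, v` satisfy `N(u) = N(v)` or
`N[u] = N[v]`. -/
def TwinFree (G : SimpleGraph V) : Prop :=
  ∀ u v : V, u ≠ v →
    ¬(G.neighborSet u = G.neighborSet v ∨ closedNbhd G u = closedNbhd G v)

section DoubleCounting

-- The sums are taken in `ℝ≥0∞`, where they can be interchanged over arbitrary index types.
open scoped ENNReal

variable {α β : Type*}

theorem tsum_subtype_indicator_one (s t : Set α) :
    ∑' a : t, s.indicator (1 : α → ℝ≥0∞) a = (s ∩ t).encard := by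
  rw [tsum_subtype t (s.indicator 1), Set.indicator_indicator, Set.inter_comm, ← tsum_subtype]
  exact ENNReal.tsum_set_one _

theorem tsum_encard_inter_comm (r : α → β → Prop) (s : Set α) (t : Set β) :
    ∑' a : s, (({b | r a b} ∩ t).encard : ℝ≥0∞) =
      ∑' b : t, (({a | r a b} ∩ s).encard : ℝ≥0∞) := by
  simp only [← tsum_subtype_indicator_one]
  exact ENNReal.tsum_comm

theorem encard_mul_le_encard_mul (r : α → β → Prop) {s : Set α} {t : Set β} {m n : ℕ∞}
    (hm : ∀ a ∈ s, m ≤ ({b | r a b} ∩ t).encard)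
    (hn : ∀ b ∈ t, ({a | r a b} ∩ s).encard ≤ n) :
    s.encard * m ≤ t.encard * n := by
  suffices (s.encard * m : ℝ≥0∞) ≤ t.encard * n by exact_mod_cast this
  calc (s.encard * m : ℝ≥0∞)
      = ∑' _ : s, (m : ℝ≥0∞) := (ENNReal.tsum_set_const s m).symm
    _ ≤ ∑' a : s, (({b | r a b} ∩ t).encard : ℝ≥0∞) :=
        ENNReal.tsum_le_tsum fun a ↦ ENat.toENNReal_le.2 (hm a a.2)
    _ = ∑' b : t, (({a | r a b} ∩ s).encard : ℝ≥0∞) := tsum_encard_inter_comm r s t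
    _ ≤ ∑' _ : t, (n : ℝ≥0∞) := ENNReal.tsum_le_tsum fun b ↦ ENat.toENNReal_le.2 (hn b b.2)
    _ = t.encard * n := ENNReal.tsum_set_const t n

end DoubleCounting

theorem mem_closedNbhd_comm (G : SimpleGraph V) {u v : V} :
    u ∈ closedNbhd G v ↔ v ∈ closedNbhd G u := by
  simp only [closedNbhd, Set.mem_insert_iff, SimpleGraph.mem_neighborSet, eq_comm, G.adj_comm]

theorem encard_closedNbhd (G : SimpleGraph V) (v : V) :
    (closedNbhd G v).encard = (G.neighborSet v).encard + 1 :=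
  Set.encard_insert_of_notMem G.irrefl

theorem errLD_cubic_lower_bound_general (G : SimpleGraph V) {S : Set V} {k d : ℕ∞}
    (hdeg : ∀ u ∈ S, (G.neighborSet u).encard ≤ d)
    (hdom : ∀ v, k ≤ (closedNbhd G v ∩ S).encard) :
    k * ENat.card V ≤ (d + 1) * S.encard := by
  rw [← Set.encard_univ, mul_comm k, mul_comm (d + 1)]
  refine encard_mul_le_encard_mul (fun v u ↦ u ∈ closedNbhd G v) (fun v _ ↦ hdom v) fun u hu ↦ ?_
  calc ({v | u ∈ closedNbhd G v} ∩ Set.univ).encard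
      = (closedNbhd G u).encard := by
        simp only [mem_closedNbhd_comm G (u := u), Set.inter_univ, Set.ofPred_mem_eq]
    _ = (G.neighborSet u).encard + 1 := encard_closedNbhd G u
    _ ≤ d + 1 := by gcongr; exact hdeg u hu

theorem errLD_cubic_lower_bound [Fintype V] (G : SimpleGraph V)
    (hcubic : ∀ v : V, (G.neighborSet v).ncard = 3) (htf : TwinFree G)
    (S : Set V) (hS : IsErrLD G S) :
    3 * Fintype.card V ≤ 4 * S.ncard := by
  simpa [← Nat.cast_le (α := ℕ∞), three_add_one_eq_four] using
    errLD_cubic_lower_bound_general G (d := 3) (by simp [← Set.coe_ncard_eq_encard, hcubic]) hS.1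
end

section
/- Every ERR:LD set of the infinite ladder graph P∞ □ P₂ has density at least 5/6; hence the minimum ERR:LD density of the infinite ladder graph is 5/6. -/
open scoped symmDiff

variable {V : Type*}

/-- The ball of radius `r` around `v₀` in graph distance. -/
def ballSet (G : SimpleGraph V) (v₀ : V) (r : ℕ) : Set V := {u | G.dist v₀ u ≤ r}

/-- The (upper) density of a vertex set `S`, relative to base vertex `v₀`. -/
noncomputable def density (G : SimpleGraph V) (S : Set V) (v₀ : V) : ℝ :=
  Filter.limsup (fun r : ℕ =>
    ((S ∩ ballSet G v₀ r).ncard : ℝ) / ((ballSet G v₀ r).ncard : ℝ)) Filter.atTop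

/-- The infinite ladder graph `P∞ □ P₂` on `ℤ × Fin 2`. -/
def ladder : SimpleGraph (ℤ × Fin 2) :=
  SimpleGraph.fromRel (fun p q => (p.2 = q.2 ∧ p.1 = q.1 + 1) ∨ (p.1 = q.1 ∧ p.2 ≠ q.2))

/-!
Every closed neighborhood of the ladder has four vertices, so condition (i) says that it contains at
most one hole, that is, one vertex outside `S`. This already forces two holes to lie at least three
columns apart, except that they could be a knight's move apart: `(x, a)` and `(x + 2, b)` with
`a ≠ b`. In that case the hole `(x, a)` and the vertex `(x + 1, b)` of `S` have the common neighbors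
`(x, b)` and `(x + 1, a)`, and only `(x - 1, a)` is left to distinguish them, against (iii). Hence a
ball of radius `r`, which has `4 * r` vertices in at most `2 * r + 1` columns, contains at most
`2 * r / 3 + O(1)` holes. Removing every third vertex of one row attains this bound.
-/

open Filter Topology

/-- The vertices of `S` adjacent to exactly one of `v` and `u`, on which conditions (ii)-(iv) of
`IsErrLD` are imposed; reducible, so that it unfolds to the form used there. -/
abbrev distinguishers (G : SimpleGraph V) (S : Set V) (v u : V) : Set V :=
  (G.neighborSet v ∩ S) ∆ (G.neighborSet u ∩ S)

section Graph

variable {G : SimpleGraph V} {S : Set V} {v₀ : V}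

lemma mem_distinguishers {v u w : V} :
    w ∈ distinguishers G S v u ↔ w ∈ S ∧ ¬ (G.Adj v w ↔ G.Adj u w) := by
  simp only [Set.mem_symmDiff, Set.mem_inter_iff, SimpleGraph.mem_neighborSet]
  tauto

lemma le_add_length_of_forall_adj {d : V → ℕ} (hd : ∀ u v, G.Adj u v → d v ≤ d u + 1) {u v : V}
    (w : G.Walk u v) : d v ≤ d u + w.length := by
  induction w with
  | nil => simp
  | cons huv _ ih =>
    have := hd _ _ huv
    rw [SimpleGraph.Walk.length_cons]
    lia

lemma exists_walk_length_eq_of_forall_exists_adj {d : V → ℕ} (h₀ : d v₀ = 0)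
    (hd : ∀ v ≠ v₀, ∃ u, G.Adj u v ∧ d v = d u + 1) (v : V) :
    ∃ w : G.Walk v₀ v, w.length = d v := by
  induction hn : d v generalizing v with
  | zero =>
    obtain rfl : v = v₀ := by
      by_contra hv
      obtain ⟨u, -, hu⟩ := hd v hv
      lia
    exact ⟨.nil, rfl⟩
  | succ n ih =>
    obtain ⟨u, huv, hu⟩ := hd v (by rintro rfl; lia)
    obtain ⟨w, hw⟩ := ih u (by lia)
    exact ⟨w.concat huv, by simp [hw]⟩

lemma dist_eq_of_forall_adj_of_forall_exists_adj {d : V → ℕ} (h₀ : d v₀ = 0)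
    (hle : ∀ u v, G.Adj u v → d v ≤ d u + 1)
    (hex : ∀ v ≠ v₀, ∃ u, G.Adj u v ∧ d v = d u + 1) (v : V) : G.dist v₀ v = d v := by
  obtain ⟨w, hw⟩ := exists_walk_length_eq_of_forall_exists_adj h₀ hex v
  obtain ⟨w', hw'⟩ := w.reachable.exists_walk_length_eq_dist
  have h_upper : G.dist v₀ v ≤ d v := hw ▸ SimpleGraph.dist_le w
  have h_lower : d v ≤ d v₀ + w'.length := le_add_length_of_forall_adj hle w'
  lia

lemma ncard_inter_ballSet_div_le_one (G : SimpleGraph V) (S : Set V) (v₀ : V) (r : ℕ) :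
    ((S ∩ ballSet G v₀ r).ncard : ℝ) / (ballSet G v₀ r).ncard ≤ 1 := by
  obtain hfin | hinf := (ballSet G v₀ r).finite_or_infinite
  · refine div_le_one_of_le₀ ?_ (by positivity)
    exact_mod_cast Set.ncard_le_ncard Set.inter_subset_right hfin
  · simp [hinf.ncard]

lemma le_density_of_tendsto {f : ℕ → ℝ} {c : ℝ} (hf : Tendsto f atTop (𝓝 c))
    (h : ∀ᶠ r in atTop, f r ≤ ((S ∩ ballSet G v₀ r).ncard : ℝ) / (ballSet G v₀ r).ncard) :
    c ≤ density G S v₀ := by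
  rw [← hf.limsup_eq]
  exact limsup_le_limsup h hf.isBoundedUnder_ge.isCoboundedUnder_le
    (isBoundedUnder_of ⟨1, ncard_inter_ballSet_div_le_one G S v₀⟩)

end Graph

section Counting

variable {α : Type*}

lemma le_encard_inter_iff_subsingleton_sdiff {N S : Set α} {n : ℕ} (hN : N.encard = n + 1) :
    n ≤ (N ∩ S).encard ↔ (N \ S).Subsingleton := by
  have hfin : N.Finite := Set.finite_of_encard_eq_coe (k := n + 1) (by exact_mod_cast hN)
  have hsum := Set.encard_sdiff_add_encard_inter N S
  rw [hN, ← hfin.sdiff.cast_ncard_eq, ← (hfin.inter_of_left S).cast_ncard_eq] at hsum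
  rw [← Set.encard_le_one_iff_subsingleton, ← hfin.sdiff.cast_ncard_eq,
    ← (hfin.inter_of_left S).cast_ncard_eq]
  norm_cast at hsum ⊢
  lia

lemma abs_sub_lt_of_ediv_eq_ediv {a b k : ℤ} (hk : 0 < k) (h : a / k = b / k) : |a - b| < k := by
  have ha_le := Int.ediv_mul_le a hk.ne'
  have hb_le := Int.ediv_mul_le b hk.ne'
  have ha_lt := Int.lt_ediv_add_one_mul_self a hk
  have hb_lt := Int.lt_ediv_add_one_mul_self b hk
  rw [h] at ha_le ha_lt
  rw [abs_lt]
  constructor <;> linarith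

lemma mul_ncard_le_of_pairwise_le_abs_sub {s : Set α} {f : α → ℤ} {k m n : ℤ} (hk : 0 < k)
    (hmn : m ≤ n) (hf : ∀ i ∈ s, f i ∈ Set.Icc m n)
    (hsep : s.Pairwise fun i j ↦ k ≤ |f i - f j|) : k * s.ncard ≤ n - m + k := by
  have hmaps : ∀ i ∈ s, (f i - m) / k ∈ (Finset.Icc 0 ((n - m) / k) : Set ℤ) := by
    intro i hi
    obtain ⟨hm, hn⟩ := hf i hi
    rw [Finset.mem_coe, Finset.mem_Icc]
    exact ⟨Int.ediv_nonneg (by lia) hk.le, Int.ediv_le_ediv hk (by lia)⟩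
  have hinj : s.InjOn fun i ↦ (f i - m) / k := by
    intro i hi j hj hij
    by_contra hne
    have hlt : |(f i - m) - (f j - m)| < k := abs_sub_lt_of_ediv_eq_ediv hk hij
    rw [sub_sub_sub_cancel_right] at hlt
    exact hlt.not_ge (hsep hi hj hne)
  have hcard := Set.ncard_le_ncard_of_injOn _ hmaps hinj (Finset.finite_toSet _)
  have hquot : 0 ≤ (n - m) / k := Int.ediv_nonneg (by lia) hk.le
  rw [Set.ncard_coe_finset, Int.card_Icc] at hcard
  calc k * s.ncard ≤ k * ((n - m) / k + 1) := by gcongr; lia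
    _ ≤ n - m + k := by linarith [Int.mul_ediv_self_le (x := n - m) hk.ne']

end Counting

section Ladder

lemma ladder_adj {x y : ℤ} {a b : Fin 2} :
    ladder.Adj (x, a) (y, b) ↔ a = b ∧ (x = y + 1 ∨ y = x + 1) ∨ x = y ∧ a ≠ b := by
  grind [ladder, SimpleGraph.fromRel_adj]

lemma closedNbhd_ladder (x : ℤ) (a : Fin 2) :
    closedNbhd ladder (x, a) = {(x, a), (x + 1, a), (x - 1, a), (x, 1 - a)} := by
  ext ⟨y, b⟩
  simp only [closedNbhd, Set.mem_insert_iff, SimpleGraph.mem_neighborSet, ladder_adj,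
    Set.mem_singleton_iff, Prod.mk.injEq]
  lia

lemma encard_closedNbhd_ladder (v : ℤ × Fin 2) : (closedNbhd ladder v).encard = 4 := by
  obtain ⟨x, a⟩ := v
  rw [closedNbhd_ladder, Set.encard_insert_of_notMem, Set.encard_insert_of_notMem,
    Set.encard_pair]
  · norm_num
  all_goals simp; try lia

lemma three_le_encard_closedNbhd_ladder_inter_iff {v : ℤ × Fin 2} {S : Set (ℤ × Fin 2)} :
    3 ≤ (closedNbhd ladder v ∩ S).encard ↔ (closedNbhd ladder v \ S).Subsingleton :=
  le_encard_inter_iff_subsingleton_sdiff (n := 3) <| by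
    rw [encard_closedNbhd_ladder]
    norm_num

lemma dist_ladder (x y : ℤ) (a b : Fin 2) :
    ladder.dist (x, a) (y, b) = (y - x).natAbs + if a = b then 0 else 1 := by
  refine dist_eq_of_forall_adj_of_forall_exists_adj (v₀ := (x, a))
    (d := fun p ↦ (p.1 - x).natAbs + if a = p.2 then 0 else 1) (by simp) ?_ ?_ (y, b)
  · rintro ⟨z, c⟩ ⟨z', c'⟩ h
    grind [ladder_adj]
  · rintro ⟨z, c⟩ hne
    by_cases hc : a = c
    · obtain hz | hz : z < x ∨ x < z := by grind
      · exact ⟨(z + 1, c), ladder_adj.2 (by simp), by grind⟩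
      · exact ⟨(z - 1, c), ladder_adj.2 (by simp), by grind⟩
    · exact ⟨(z, a), ladder_adj.2 (by simp [hc]), by grind⟩

lemma mem_ballSet_ladder {x y : ℤ} {a b : Fin 2} {r : ℕ} :
    (y, b) ∈ ballSet ladder (x, a) r ↔ (y - x).natAbs + (if a = b then 0 else 1) ≤ r := by
  rw [ballSet, Set.mem_ofPred_eq, dist_ladder]

lemma ballSet_ladder (x : ℤ) (a : Fin 2) (r : ℕ) :
    ballSet ladder (x, a) r =
      (Finset.Icc (x - r) (x + r) ×ˢ {a} ∪ Finset.Icc (x - r + 1) (x + r - 1) ×ˢ {1 - a} :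
        Finset (ℤ × Fin 2)) := by
  ext ⟨y, b⟩
  simp only [mem_ballSet_ladder, Finset.mem_coe, Finset.mem_union, Finset.mem_product,
    Finset.mem_Icc, Finset.mem_singleton]
  lia

lemma ncard_ballSet_ladder (v₀ : ℤ × Fin 2) {r : ℕ} (hr : 1 ≤ r) :
    (ballSet ladder v₀ r).ncard = 4 * r := by
  obtain ⟨x, a⟩ := v₀
  rw [ballSet_ladder, Set.ncard_coe_finset, Finset.card_union_of_disjoint]
  · simp only [Finset.card_product, Int.card_Icc, Finset.card_singleton]
    lia
  · rw [Finset.disjoint_left]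
    rintro ⟨y, b⟩ hy hy'
    simp only [Finset.mem_product, Finset.mem_singleton] at hy hy'
    lia

lemma finite_ballSet_ladder (v₀ : ℤ × Fin 2) (r : ℕ) : (ballSet ladder v₀ r).Finite := by
  rw [ballSet_ladder]
  exact Finset.finite_toSet _

lemma ncard_inter_ballSet_ladder_div (S : Set (ℤ × Fin 2)) (v₀ : ℤ × Fin 2) {r : ℕ}
    (hr : 1 ≤ r) :
    ((S ∩ ballSet ladder v₀ r).ncard : ℝ) / (ballSet ladder v₀ r).ncard =
      1 - (ballSet ladder v₀ r \ S).ncard / (4 * r) := by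
  have hsum := Set.ncard_inter_add_ncard_sdiff_eq_ncard _ S (finite_ballSet_ladder v₀ r)
  rw [Set.inter_comm, ncard_ballSet_ladder v₀ hr] at hsum
  have hsum' : ((S ∩ ballSet ladder v₀ r).ncard : ℝ) + (ballSet ladder v₀ r \ S).ncard =
      4 * r := by exact_mod_cast hsum
  have hr' : (4 * r : ℝ) ≠ 0 := by positivity
  rw [ncard_ballSet_ladder v₀ hr, eq_sub_iff_add_eq, Nat.cast_mul, Nat.cast_ofNat, ← add_div,
    hsum', div_self hr']

end Ladder

section LowerBound

variable {S : Set (ℤ × Fin 2)}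

lemma IsErrLD.subsingleton_closedNbhd_sdiff (h : IsErrLD ladder S) (v : ℤ × Fin 2) :
    (closedNbhd ladder v \ S).Subsingleton :=
  three_le_encard_closedNbhd_ladder_inter_iff.1 (h.1 v)

lemma IsErrLD.knight_move_mem (h : IsErrLD ladder S) {x : ℤ} {a b : Fin 2} (hab : a ≠ b)
    (hp : (x, a) ∉ S) : (x + 2, b) ∈ S := by
  by_contra hq
  have hu : (x + 1, b) ∈ S := by
    by_contra hu
    have heq : (x + 1, b) = (x + 2, b) :=
      h.subsingleton_closedNbhd_sdiff (x + 1, b) ⟨by simp [closedNbhd_ladder], hu⟩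
        ⟨by simp [closedNbhd_ladder, add_assoc], hq⟩
    simp at heq
  have hsub : distinguishers ladder S (x, a) (x + 1, b) \ {(x + 1, b)} ⊆ {(x - 1, a)} := by
    rintro ⟨y, c⟩ ⟨hw, -⟩
    rw [mem_distinguishers, ladder_adj, ladder_adj] at hw
    rw [Set.mem_singleton_iff, Prod.mk.injEq]
    grind
  have htwo := (h.2.2.1 _ hp _ hu).trans (Set.encard_le_encard hsub)
  rw [Set.encard_singleton] at htwo
  exact absurd htwo (by norm_num)

lemma IsErrLD.pairwise_compl_three_le_abs_sub (h : IsErrLD ladder S) :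
    Sᶜ.Pairwise fun p q ↦ 3 ≤ |p.1 - q.1| := by
  rintro ⟨x, a⟩ hp ⟨y, b⟩ hq hne
  wlog hxy : x ≤ y generalizing x y a b
  · rw [abs_sub_comm]
    exact this y b hq x a hp hne.symm (by lia)
  by_contra! hlt
  rw [abs_lt] at hlt
  have hfar : ∀ v, (x, a) ∈ closedNbhd ladder v → (y, b) ∉ closedNbhd ladder v :=
    fun v hpv hqv ↦ hne (h.subsingleton_closedNbhd_sdiff v ⟨hpv, hp⟩ ⟨hqv, hq⟩)
  simp only [closedNbhd_ladder, Set.mem_insert_iff, Set.mem_singleton_iff, Prod.mk.injEq,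
    Prod.forall] at hfar
  obtain rfl | rfl | rfl : y = x ∨ y = x + 1 ∨ y = x + 2 := by lia
  · have := hfar y a
    lia
  · have := hfar (x + 1) a
    lia
  · by_cases hab : a = b
    · have := hfar (x + 1) a
      lia
    · exact hq (h.knight_move_mem hab hp)

lemma IsErrLD.three_mul_ncard_ballSet_sdiff_le (h : IsErrLD ladder S) (v₀ : ℤ × Fin 2) (r : ℕ) :
    3 * (ballSet ladder v₀ r \ S).ncard ≤ 2 * r + 3 := by
  have hcols : ∀ p ∈ ballSet ladder v₀ r \ S, p.1 ∈ Set.Icc (v₀.1 - r) (v₀.1 + r) := by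
    rintro ⟨y, b⟩ ⟨hy, -⟩
    rw [mem_ballSet_ladder] at hy
    rw [Set.mem_Icc]
    lia
  have := mul_ncard_le_of_pairwise_le_abs_sub three_pos (by lia) hcols
    (h.pairwise_compl_three_le_abs_sub.mono (Set.sdiff_subset_compl _ _))
  lia

lemma IsErrLD.le_ncard_inter_ballSet_ladder_div (h : IsErrLD ladder S) (v₀ : ℤ × Fin 2) {r : ℕ}
    (hr : 1 ≤ r) :
    5 / 6 - 1 / 4 / (r : ℝ) ≤
      ((S ∩ ballSet ladder v₀ r).ncard : ℝ) / (ballSet ladder v₀ r).ncard := by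
  have hholes : 3 * ((ballSet ladder v₀ r \ S).ncard : ℝ) ≤ 2 * r + 3 := by
    exact_mod_cast h.three_mul_ncard_ballSet_sdiff_le v₀ r
  rw [ncard_inter_ballSet_ladder_div S v₀ hr]
  field_simp
  linarith

lemma tendsto_five_sixths_sub_div :
    Tendsto (fun r : ℕ ↦ 5 / 6 - 1 / 4 / (r : ℝ)) atTop (𝓝 (5 / 6)) := by
  simpa using (tendsto_const_div_atTop_nhds_zero_nat (1 / 4 : ℝ)).const_sub (5 / 6)

theorem IsErrLD.five_sixths_le_density (h : IsErrLD ladder S) (v₀ : ℤ × Fin 2) :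
    5 / 6 ≤ density ladder S v₀ :=
  le_density_of_tendsto tendsto_five_sixths_sub_div <| by
    filter_upwards [eventually_ge_atTop 1] with r hr
    exact h.le_ncard_inter_ballSet_ladder_div v₀ hr

end LowerBound

section Optimal

/-- The set attaining the bound: every third vertex is removed from row `0`. -/
def punctured : Set (ℤ × Fin 2) := {p | p.2 = 0 ∧ 3 ∣ p.1}ᶜ

lemma mk_zero_mem_punctured {x : ℤ} : (x, 0) ∈ punctured ↔ ¬ 3 ∣ x := by simp [punctured]

lemma mk_one_mem_punctured (x : ℤ) : (x, 1) ∈ punctured := by simp [punctured]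

lemma notMem_punctured {x : ℤ} {a : Fin 2} : (x, a) ∉ punctured ↔ a = 0 ∧ 3 ∣ x := by
  simp [punctured]

lemma three_le_encard_closedNbhd_inter_punctured (v : ℤ × Fin 2) :
    3 ≤ (closedNbhd ladder v ∩ punctured).encard := by
  rw [three_le_encard_closedNbhd_ladder_inter_iff]
  rintro ⟨y, b⟩ ⟨hy, hb⟩ ⟨z, c⟩ ⟨hz, hc⟩
  obtain ⟨x, a⟩ := v
  rw [notMem_punctured] at hb hc
  simp only [closedNbhd_ladder, Set.mem_insert_iff, Set.mem_singleton_iff, Prod.mk.injEq]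
    at hy hz ⊢
  lia

lemma mk_one_mem_distinguishers_of_ne {x y : ℤ} (hxy : x ≠ y) :
    (x, 1) ∈ distinguishers ladder punctured (x, 0) (y, 0) := by
  simp [mem_distinguishers, ladder_adj, mk_one_mem_punctured, hxy.symm]

lemma exists_mk_one_mem_distinguishers {x y : ℤ} {a : Fin 2} (hne : (x, a) ≠ (y, 1)) :
    ∃ z, z ≠ x ∧ z ≠ y ∧ (z, 1) ∈ distinguishers ladder punctured (x, a) (y, 1) := by
  simp only [mem_distinguishers, ladder_adj, mk_one_mem_punctured]
  obtain hxy | hxy := le_or_gt x y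
  · exact ⟨y + 1, by grind⟩
  · exact ⟨y - 1, by grind⟩

lemma exists_mk_zero_mem_distinguishers {x : ℤ} (hx : 3 ∣ x) (y : ℤ) :
    ∃ z, (z, 0) ∈ distinguishers ladder punctured (x, 0) (y, 1) := by
  simp only [mem_distinguishers, ladder_adj, mk_zero_mem_punctured]
  obtain hxy | hxy := le_or_gt x y
  · exact ⟨x - 1, by grind⟩
  · exact ⟨x + 1, by grind⟩

lemma one_le_encard_distinguishers_punctured {v u : ℤ × Fin 2} (hne : u ≠ v) :
    1 ≤ (distinguishers ladder punctured v u \ {v, u}).encard := by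
  wlog hrow : v.2 ≤ u.2 generalizing v u
  · rw [distinguishers, symmDiff_comm, Set.pair_comm]
    exact this hne.symm (by lia)
  rw [Set.one_le_encard_iff_nonempty]
  obtain ⟨x, a⟩ := v
  obtain ⟨y, b⟩ := u
  obtain rfl | rfl : b = 0 ∨ b = 1 := by lia
  · obtain rfl : a = 0 := by lia
    exact ⟨(x, 1), mk_one_mem_distinguishers_of_ne (by grind), by simp⟩
  · obtain ⟨z, hzx, hzy, hz⟩ := exists_mk_one_mem_distinguishers hne.symm
    exact ⟨(z, 1), hz, by simp [hzx, hzy]⟩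

lemma two_le_encard_distinguishers_punctured {v u : ℤ × Fin 2} (hv : v ∉ punctured)
    (hu : u ∈ punctured) : 2 ≤ (distinguishers ladder punctured v u \ {u}).encard := by
  suffices (distinguishers ladder punctured v u \ {u}).Nontrivial from
    Order.add_one_le_of_lt (Set.one_lt_encard_iff_nontrivial.2 this)
  obtain ⟨x, a⟩ := v
  obtain ⟨y, b⟩ := u
  obtain ⟨rfl, hx⟩ := notMem_punctured.1 hv
  obtain rfl | rfl : b = 0 ∨ b = 1 := by lia
  · have hxy : x ≠ y := by rintro rfl; exact hv hu
    have hy := mk_one_mem_distinguishers_of_ne hxy.symm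
    rw [distinguishers, symmDiff_comm] at hy
    exact ⟨(x, 1), ⟨mk_one_mem_distinguishers_of_ne hxy, by simp⟩, (y, 1), ⟨hy, by simp⟩,
      by simpa using hxy⟩
  · obtain ⟨z, -, hzy, hz⟩ := exists_mk_one_mem_distinguishers (show (x, 0) ≠ (y, 1) by simp)
    obtain ⟨w, hw⟩ := exists_mk_zero_mem_distinguishers hx y
    exact ⟨(z, 1), ⟨hz, by simp [hzy]⟩, (w, 0), ⟨hw, by simp⟩, by simp⟩

lemma three_le_encard_distinguishers_punctured {v u : ℤ × Fin 2} (hv : v ∉ punctured)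
    (hu : u ∉ punctured) (hne : u ≠ v) : 3 ≤ (distinguishers ladder punctured v u).encard := by
  obtain ⟨x, a⟩ := v
  obtain ⟨y, b⟩ := u
  obtain ⟨rfl, hx⟩ := notMem_punctured.1 hv
  obtain ⟨rfl, hy⟩ := notMem_punctured.1 hu
  have hsub : {(x - 1, 0), (x + 1, 0), (x, 1)} ⊆ distinguishers ladder punctured (x, 0) (y, 0) := by
    simp only [Set.insert_subset_iff, Set.singleton_subset_iff, mem_distinguishers, ladder_adj,
      mk_zero_mem_punctured, mk_one_mem_punctured]
    grind
  refine le_of_eq_of_le (Set.encard_eq_three.2 ⟨_, _, _, ?_, ?_, ?_, rfl⟩).symm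
    (Set.encard_le_encard hsub)
  all_goals simp; try lia

lemma isErrLD_punctured : IsErrLD ladder punctured :=
  ⟨three_le_encard_closedNbhd_inter_punctured,
    fun _ _ _ _ hne ↦ one_le_encard_distinguishers_punctured hne,
    fun _ hv _ hu ↦ two_le_encard_distinguishers_punctured hv hu,
    fun _ hv _ hu hne ↦ three_le_encard_distinguishers_punctured hv hu hne⟩

lemma le_three_mul_ncard_ballSet_sdiff_punctured (v₀ : ℤ × Fin 2) (r : ℕ) :
    2 * r ≤ 3 * (ballSet ladder v₀ r \ punctured).ncard + 3 := by
  obtain ⟨x, a⟩ := v₀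
  -- Columns at distance at most `r - 1` from `x` meet the ball in both rows, in particular in row
  -- `0`; the left endpoint below is `(x - r + 1) / 3` rounded up.
  have hmaps : ∀ k ∈ (Finset.Icc ((x - r + 3) / 3) ((x + r - 1) / 3) : Set ℤ),
      (3 * k, 0) ∈ ballSet ladder (x, a) r \ punctured := by
    intro k hk
    rw [Finset.mem_coe, Finset.mem_Icc] at hk
    rw [Set.mem_sdiff, mem_ballSet_ladder, notMem_punctured]
    grind
  have hinj : Set.InjOn (fun k : ℤ ↦ (3 * k, (0 : Fin 2)))
      (Finset.Icc ((x - r + 3) / 3) ((x + r - 1) / 3)) := by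
    intro k _ l _ hkl
    simpa using hkl
  have hcard := Set.ncard_le_ncard_of_injOn _ hmaps hinj (finite_ballSet_ladder (x, a) r).sdiff
  rw [Set.ncard_coe_finset, Int.card_Icc] at hcard
  lia

lemma ncard_punctured_inter_ballSet_ladder_div_le (v₀ : ℤ × Fin 2) {r : ℕ} (hr : 1 ≤ r) :
    ((punctured ∩ ballSet ladder v₀ r).ncard : ℝ) / (ballSet ladder v₀ r).ncard ≤
      5 / 6 + 1 / 4 / (r : ℝ) := by
  have hholes : (2 * r : ℝ) ≤ 3 * (ballSet ladder v₀ r \ punctured).ncard + 3 := by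
    exact_mod_cast le_three_mul_ncard_ballSet_sdiff_punctured v₀ r
  rw [ncard_inter_ballSet_ladder_div punctured v₀ hr]
  field_simp
  linarith

theorem density_punctured (v₀ : ℤ × Fin 2) : density ladder punctured v₀ = 5 / 6 := by
  have hupper : Tendsto (fun r : ℕ ↦ 5 / 6 + 1 / 4 / (r : ℝ)) atTop (𝓝 (5 / 6)) := by
    simpa using (tendsto_const_div_atTop_nhds_zero_nat (1 / 4 : ℝ)).const_add (5 / 6)
  refine Tendsto.limsup_eq (tendsto_of_tendsto_of_tendsto_of_le_of_le' tendsto_five_sixths_sub_div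
    hupper ?_ ?_)
  all_goals filter_upwards [eventually_ge_atTop 1] with r hr
  · exact isErrLD_punctured.le_ncard_inter_ballSet_ladder_div v₀ hr
  · exact ncard_punctured_inter_ballSet_ladder_div_le v₀ hr

end Optimal

theorem errLD_ladder_density_general :
    (∀ S : Set (ℤ × Fin 2), IsErrLD ladder S → ∀ v₀, 5 / 6 ≤ density ladder S v₀) ∧
    (∃ S : Set (ℤ × Fin 2), IsErrLD ladder S ∧ ∀ v₀, density ladder S v₀ = 5 / 6) :=
  ⟨fun _ h ↦ h.five_sixths_le_density, punctured, isErrLD_punctured, density_punctured⟩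

theorem errLD_ladder_density :
    (∀ S : Set (ℤ × Fin 2), IsErrLD ladder S →
      (5 : ℝ) / 6 ≤ density ladder S ((0 : ℤ), (0 : Fin 2))) ∧
    (∃ S : Set (ℤ × Fin 2), IsErrLD ladder S ∧
      density ladder S ((0 : ℤ), (0 : Fin 2)) = (5 : ℝ) / 6) := by
  obtain ⟨hlower, S, hS, hdensity⟩ := errLD_ladder_density_general
  exact ⟨fun S hS ↦ hlower S hS _, S, hS, hdensity _⟩
end
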